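/- (Local Morrey oscillation estimate) Let $n\ge2$, $\delta\in(0,n]$, and $p\in(\delta,\infty)$. There is a constant $c=c(\delta,n,p)$ such that for every $x\in\mathbb{R}^n$, $r>0$, every $u\in C^1(B(x,2r))$, and every $y\in B(x,r)$, $|u(x)-u(y)| \le c\,r\Big(\frac{1}{|B(x,2r)|^{\delta/n}}\int_{B(x,2r)}|\nabla u(v)|^p\,d\mathcal{H}^{\delta}_\infty\Big)^{1/p}$. -/

import Mathlib

open MeasureTheory Metric Set ENNReal

/-- δ-dimensional Hausdorff content via countable ball coverings. -/
noncomputable def hc (n : ℕ) (δ : ℝ) (E : Set (EuclideanSpace ℝ (Fin n))) : ℝ≥0∞ :=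
  ⨅ (c : ℕ → EuclideanSpace ℝ (Fin n)) (r : ℕ → ℝ) (_ : ∀ i, 0 < r i)
    (_ : E ⊆ ⋃ i, ball (c i) (r i)), ∑' i, ENNReal.ofReal (r i ^ δ)

/-- Choquet integral of a nonnegative function over Ω with respect to `hc n δ`. -/
noncomputable def choquet (n : ℕ) (δ : ℝ) (Ω : Set (EuclideanSpace ℝ (Fin n)))
    (f : EuclideanSpace ℝ (Fin n) → ℝ≥0∞) : ℝ≥0∞ :=
  ∫⁻ t in Ioi (0:ℝ), hc n δ {x | x ∈ Ω ∧ ENNReal.ofReal t < f x}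

theorem ENNReal.tsum_rpow_le_rpow_tsum {ι : Type*} (a : ι → ℝ≥0∞) {s : ℝ} (hs : 1 ≤ s) :
    ∑' i, a i ^ s ≤ (∑' i, a i) ^ s := by
  have split (b : ℝ≥0∞) : b ^ s = b ^ (s - 1) * b := by
    simpa using ENNReal.rpow_add_of_nonneg (x := b) (s - 1) 1 (by linarith) zero_le_one
  calc ∑' i, a i ^ s ≤ ∑' i, (∑' j, a j) ^ (s - 1) * a i := by
        refine ENNReal.tsum_le_tsum fun i => ?_
        rw [split]
        gcongr
        exact ENNReal.le_tsum i
    _ = (∑' i, a i) ^ s := by rw [ENNReal.tsum_mul_left, ← split]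

theorem hc_mono (n : ℕ) (δ : ℝ) : Monotone (hc n δ) := fun E F hEF => by
  unfold hc
  gcongr with c r hr
  exact iInf_mono' fun h => ⟨hEF.trans h, le_rfl⟩

/-- Lebesgue measure is controlled by the `n / δ` power of the `δ`-dimensional content. -/
theorem volume_le_hc_rpow {n : ℕ} {δ : ℝ} (hδ : 0 < δ) (hδn : δ ≤ n)
    (E : Set (EuclideanSpace ℝ (Fin n))) :
    volume E ≤ volume (ball (0 : EuclideanSpace ℝ (Fin n)) 1) * hc n δ E ^ ((n : ℝ) / δ) := by
  have hs : 1 ≤ (n : ℝ) / δ := (one_le_div hδ).2 hδn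
  set ω := volume (ball (0 : EuclideanSpace ℝ (Fin n)) 1)
  have hω0 : ω ≠ 0 := (measure_ball_pos _ _ one_pos).ne'
  have hωt : ω ≠ ⊤ := measure_ball_lt_top.ne
  rw [mul_comm, ← ENNReal.div_le_iff hω0 hωt, ← ENNReal.rpow_inv_le_iff (by linarith)]
  unfold hc
  refine le_iInf fun c => le_iInf fun r => le_iInf fun hr => le_iInf fun hE => ?_
  rw [ENNReal.rpow_inv_le_iff (by linarith), ENNReal.div_le_iff hω0 hωt]
  calc volume E ≤ ∑' i, volume (ball (c i) (r i)) :=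
        (measure_mono hE).trans (measure_iUnion_le _)
    _ = (∑' i, ENNReal.ofReal (r i ^ δ) ^ ((n : ℝ) / δ)) * ω := by
        rw [← ENNReal.tsum_mul_right]
        refine tsum_congr fun i => ?_
        rw [Measure.addHaar_ball_of_pos _ _ (hr i), ENNReal.ofReal_rpow_of_nonneg
          (Real.rpow_nonneg (hr i).le _) (by linarith), ← Real.rpow_mul (hr i).le,
          mul_div_cancel₀ _ hδ.ne', Real.rpow_natCast, finrank_euclideanSpace_fin]
    _ ≤ _ := by gcongr; exact ENNReal.tsum_rpow_le_rpow_tsum _ hs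

/-- The `L^{pn/δ}` norm is controlled by the Choquet integral of the `p`-th power. -/
theorem lintegral_rpow_le_choquet {n : ℕ} {δ p : ℝ} (hδ : 0 < δ) (hδn : δ ≤ n) (hp : 0 < p)
    {Ω : Set (EuclideanSpace ℝ (Fin n))} (hΩ : MeasurableSet Ω)
    {g : EuclideanSpace ℝ (Fin n) → ℝ} (hg : AEMeasurable g (volume.restrict Ω))
    (hg0 : ∀ v, 0 ≤ g v) :
    ∫⁻ v in Ω, ENNReal.ofReal (g v) ^ (p * n / δ) ≤
      ENNReal.ofReal (n / δ) * volume (ball (0 : EuclideanSpace ℝ (Fin n)) 1) *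
        choquet n δ Ω (fun v => ENNReal.ofReal (g v ^ p)) ^ ((n : ℝ) / δ) := by
  have hs : 1 ≤ (n : ℝ) / δ := (one_le_div hδ).2 hδn
  set s : ℝ := (n : ℝ) / δ
  set ω := volume (ball (0 : EuclideanSpace ℝ (Fin n)) 1)
  set F : ℝ → ℝ≥0∞ := fun t => hc n δ {v | v ∈ Ω ∧ ENNReal.ofReal t < ENNReal.ofReal (g v ^ p)}
  set I := choquet n δ Ω (fun v => ENNReal.ofReal (g v ^ p))
  have hFanti : Antitone F := fun t t' htt' =>
    hc_mono n δ fun v hv => ⟨hv.1, (ENNReal.ofReal_le_ofReal htt').trans_lt hv.2⟩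
  have hmarkov : ∀ t, ENNReal.ofReal t * F t ≤ I := fun t => by
    calc ENNReal.ofReal t * F t = ∫⁻ _ in Ioc 0 t, F t := by simp [mul_comm]
      _ ≤ ∫⁻ τ in Ioc 0 t, F τ := setLIntegral_mono' measurableSet_Ioc fun τ hτ => hFanti hτ.2
      _ ≤ I := lintegral_mono_set Ioc_subset_Ioi_self
  have split (b : ℝ≥0∞) : b ^ s = b ^ (s - 1) * b := by
    simpa using ENNReal.rpow_add_of_nonneg (x := b) (s - 1) 1 (by linarith) zero_le_one
  calc ∫⁻ v in Ω, ENNReal.ofReal (g v) ^ (p * n / δ)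
      = ∫⁻ v in Ω, ENNReal.ofReal ((g v ^ p) ^ s) := by
        refine lintegral_congr fun v => ?_
        rw [ENNReal.ofReal_rpow_of_nonneg (hg0 v) (by positivity), ← Real.rpow_mul (hg0 v),
          mul_div_assoc]
    _ = ENNReal.ofReal s * ∫⁻ t in Ioi (0 : ℝ), volume.restrict Ω {v | t < g v ^ p} *
          ENNReal.ofReal (t ^ (s - 1)) :=
        lintegral_rpow_eq_lintegral_meas_lt_mul _
          (Filter.Eventually.of_forall fun v => Real.rpow_nonneg (hg0 v) p) (hg.pow_const p)
          (by linarith)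
    _ ≤ ENNReal.ofReal s * ∫⁻ t in Ioi (0 : ℝ), ω * I ^ (s - 1) * F t := by
        gcongr ENNReal.ofReal s * ?_
        refine setLIntegral_mono' measurableSet_Ioi fun t (ht : 0 < t) => ?_
        have hset : {v | t < g v ^ p} ∩ Ω =
            {v | v ∈ Ω ∧ ENNReal.ofReal t < ENNReal.ofReal (g v ^ p)} := by
          ext v
          simp [ENNReal.ofReal_lt_ofReal_iff_of_nonneg ht.le, and_comm]
        rw [Measure.restrict_apply' hΩ, hset]
        calc _ ≤ ω * F t ^ s * ENNReal.ofReal (t ^ (s - 1)) := by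
              gcongr
              exact volume_le_hc_rpow hδ hδn _
          _ = ω * (ENNReal.ofReal t * F t) ^ (s - 1) * F t := by
              rw [ENNReal.mul_rpow_of_nonneg _ _ (by linarith), split,
                ENNReal.ofReal_rpow_of_nonneg ht.le (by linarith)]
              ring
          _ ≤ _ := by
              gcongr
              exact hmarkov t
    _ = _ := by
        rw [lintegral_const_mul _ hFanti.measurable, split I, show ∫⁻ t in Ioi (0 : ℝ), F t = I
          from rfl]
        ring

theorem lintegral_comp_add_smul_sub {E : Type*} [NormedAddCommGroup E] [NormedSpace ℝ E]
    [MeasurableSpace E] [BorelSpace E] [FiniteDimensional ℝ E] (μ : Measure E)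
    [μ.IsAddHaarMeasure] {f : E → ℝ≥0∞} (hf : Measurable f) (z : E) {t : ℝ} (ht : 0 < t) :
    ∫⁻ w, f (z + t • (w - z)) ∂μ =
      ENNReal.ofReal (t ^ (-(Module.finrank ℝ E : ℝ))) * ∫⁻ w, f w ∂μ := by
  have hf' : Measurable fun w => f (w + (z - t • z)) := hf.comp (measurable_add_const _)
  calc ∫⁻ w, f (z + t • (w - z)) ∂μ = ∫⁻ w, f (t • w + (z - t • z)) ∂μ := by
        refine lintegral_congr fun w => ?_
        congr 1
        rw [smul_sub]
        abel
    _ = ∫⁻ w, f (w + (z - t • z)) ∂(Measure.map (t • ·) μ) :=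
        (lintegral_map hf' (measurable_const_smul t)).symm
    _ = _ := by
        rw [Measure.map_addHaar_smul μ ht.ne', lintegral_smul_measure, lintegral_add_right_eq_self,
          abs_of_pos (by positivity), Real.rpow_neg ht.le, Real.rpow_natCast, smul_eq_mul]

theorem enorm_sub_le_lintegral_fderivWithin {E : Type*} [NormedAddCommGroup E] [NormedSpace ℝ E]
    {B : Set E} (hB : IsOpen B) (hBc : Convex ℝ B) {u : E → ℝ} (hu : ContDiffOn ℝ 1 u B)
    {z w : E} (hz : z ∈ B) (hw : w ∈ B) :
    ‖u z - u w‖ₑ ≤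
      ∫⁻ t in Ioc (0 : ℝ) 1, ‖fderivWithin ℝ u B (z + t • (w - z))‖ₑ * ‖w - z‖ₑ := by
  have hmem : ∀ t ∈ Icc (0 : ℝ) 1, z + t • (w - z) ∈ B := fun t ht =>
    hBc.add_smul_sub_mem hz hw ht
  have hcont : ContinuousOn (fun t : ℝ => fderivWithin ℝ u B (z + t • (w - z)) (w - z))
      (Icc 0 1) :=
    ((hu.continuousOn_fderivWithin hB.uniqueDiffOn le_rfl).comp
      (by fun_prop) hmem).clm_apply continuousOn_const
  have hderiv : ∀ t ∈ uIcc (0 : ℝ) 1, HasDerivAt (fun t : ℝ => u (z + t • (w - z)))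
      (fderivWithin ℝ u B (z + t • (w - z)) (w - z)) t := fun t ht => by
    rw [uIcc_of_le zero_le_one] at ht
    have hd := ((hu.differentiableOn one_ne_zero _ (hmem t ht)).hasFDerivWithinAt).hasFDerivAt
      (hB.mem_nhds (hmem t ht))
    have hl : HasDerivAt (fun t : ℝ => z + t • (w - z)) (w - z) t := by
      simpa using ((hasDerivAt_id t).smul_const (w - z)).const_add z
    exact hd.comp_hasDerivAt t hl
  have hint := intervalIntegral.integral_eq_sub_of_hasDerivAt hderiv
    (hcont.intervalIntegrable_of_Icc zero_le_one)
  rw [intervalIntegral.integral_of_le zero_le_one] at hint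
  simp only [one_smul, add_sub_cancel, zero_smul, add_zero] at hint
  rw [← enorm_neg, neg_sub, ← hint]
  refine (enorm_integral_le_lintegral_enorm _).trans (lintegral_mono fun t => ?_)
  exact ContinuousLinearMap.le_opENorm _ _

theorem lintegral_Ioc_rpow_neg {a : ℝ} (ha : a < 1) :
    ∫⁻ t in Ioc (0 : ℝ) 1, ENNReal.ofReal (t ^ (-a)) = ENNReal.ofReal (1 / (1 - a)) := by
  rw [← ofReal_integral_eq_lintegral_ofReal, ← intervalIntegral.integral_of_le zero_le_one,
    integral_rpow (Or.inl (by linarith))]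
  · rw [Real.one_rpow, Real.zero_rpow (by linarith)]
    congr 1
    ring
  · exact (intervalIntegrable_iff_integrableOn_Ioc_of_le zero_le_one).1
      (intervalIntegral.intervalIntegrable_rpow' (by linarith))
  · filter_upwards [ae_restrict_mem measurableSet_Ioc] with t ht
    exact Real.rpow_nonneg ht.1.le _

theorem lintegral_le_lintegral_rpow_mul_measure_univ {α : Type*} [MeasurableSpace α]
    (μ : Measure α) {f : α → ℝ≥0∞} (hf : AEMeasurable f μ) {q : ℝ} (hq : 1 ≤ q) :
    ∫⁻ w, f w ∂μ ≤ (∫⁻ w, f w ^ q ∂μ) ^ (1 / q) * μ univ ^ (1 - 1 / q) := by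
  simpa [eLpNorm'] using eLpNorm'_le_eLpNorm'_mul_rpow_measure_univ one_pos hq
    hf.aestronglyMeasurable

/-- Morrey's estimate for the mean oscillation about a point of a convex open set. -/
theorem lintegral_enorm_sub_le_morrey {E : Type*} [NormedAddCommGroup E] [NormedSpace ℝ E]
    [MeasurableSpace E] [BorelSpace E] [FiniteDimensional ℝ E] (μ : Measure E)
    [μ.IsAddHaarMeasure] {B : Set E} (hB : IsOpen B) (hBc : Convex ℝ B)
    {u : E → ℝ} (hu : ContDiffOn ℝ 1 u B) {q : ℝ} (hq1 : 1 ≤ q) (hq : Module.finrank ℝ E < q)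
    {z : E} (hz : z ∈ B) {D : ℝ≥0∞} (hD : ∀ w ∈ B, ‖w - z‖ₑ ≤ D) :
    ∫⁻ w in B, ‖u z - u w‖ₑ ∂μ ≤
      ENNReal.ofReal (1 / (1 - Module.finrank ℝ E / q)) * D *
        ((∫⁻ w in B, ‖fderivWithin ℝ u B w‖ₑ ^ q ∂μ) ^ (1 / q) * μ B ^ (1 - 1 / q)) := by
  have hq0 : 0 < q := by linarith
  set G : E → ℝ≥0∞ := B.indicator fun w => ‖fderivWithin ℝ u B w‖ₑ with hG
  set J : ℝ≥0∞ := ∫⁻ w in B, ‖fderivWithin ℝ u B w‖ₑ ^ q ∂μ with hJ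
  have hGm : Measurable G := by
    classical
    rw [hG, ← piecewise_eq_indicator]
    exact (hu.continuousOn_fderivWithin hB.uniqueDiffOn le_rfl).enorm.measurable_piecewise
      continuousOn_const hB.measurableSet
  have hGJ : ∫⁻ w, G w ^ q ∂μ = J := by
    rw [hJ, ← lintegral_indicator hB.measurableSet]
    refine lintegral_congr fun w => ?_
    by_cases hw : w ∈ B <;> simp [hG, hw, hq0]
  have hpoint : ∀ w ∈ B, ‖u z - u w‖ₑ ≤ ∫⁻ t in Ioc (0 : ℝ) 1, G (z + t • (w - z)) * D := by
    intro w hw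
    refine (enorm_sub_le_lintegral_fderivWithin hB hBc hu hz hw).trans
      (setLIntegral_mono' measurableSet_Ioc fun t ht => ?_)
    have : z + t • (w - z) ∈ B := hBc.add_smul_sub_mem hz hw ⟨ht.1.le, ht.2⟩
    simp only [hG, indicator_of_mem this]
    gcongr
    exact hD w hw
  have hscale : ∀ t ∈ Ioc (0 : ℝ) 1, ∫⁻ w in B, G (z + t • (w - z)) ∂μ ≤
      ENNReal.ofReal (t ^ (-(Module.finrank ℝ E / q))) * (J ^ (1 / q) * μ B ^ (1 - 1 / q)) := by
    intro t ht
    have hm : Measurable fun w => G (z + t • (w - z)) := hGm.comp (by fun_prop)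
    calc ∫⁻ w in B, G (z + t • (w - z)) ∂μ
        ≤ (∫⁻ w in B, G (z + t • (w - z)) ^ q ∂μ) ^ (1 / q) * μ B ^ (1 - 1 / q) := by
          simpa using lintegral_le_lintegral_rpow_mul_measure_univ (μ.restrict B)
            hm.aemeasurable hq1
      _ ≤ (∫⁻ w, G (z + t • (w - z)) ^ q ∂μ) ^ (1 / q) * μ B ^ (1 - 1 / q) := by
          gcongr
          exact Measure.restrict_le_self
      _ = _ := by
          rw [lintegral_comp_add_smul_sub μ (hGm.pow_const q) z ht.1, hGJ,
            ENNReal.mul_rpow_of_nonneg _ _ (by positivity),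
            ENNReal.ofReal_rpow_of_nonneg (Real.rpow_nonneg ht.1.le _) (by positivity),
            ← Real.rpow_mul ht.1.le, mul_assoc]
          congr 3
          ring
  have hGm2 : Measurable fun x : E × ℝ => G (z + x.2 • (x.1 - z)) := hGm.comp (by fun_prop)
  calc ∫⁻ w in B, ‖u z - u w‖ₑ ∂μ
      ≤ ∫⁻ w in B, (∫⁻ t in Ioc (0 : ℝ) 1, G (z + t • (w - z)) * D) ∂μ :=
        setLIntegral_mono' hB.measurableSet hpoint
    _ = ∫⁻ t in Ioc (0 : ℝ) 1, ∫⁻ w in B, G (z + t • (w - z)) * D ∂μ :=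
        lintegral_lintegral_swap (hGm2.mul_const D).aemeasurable
    _ = ∫⁻ t in Ioc (0 : ℝ) 1, (∫⁻ w in B, G (z + t • (w - z)) ∂μ) * D :=
        lintegral_congr fun t => lintegral_mul_const _ (hGm.comp (by fun_prop))
    _ ≤ ∫⁻ t in Ioc (0 : ℝ) 1, ENNReal.ofReal (t ^ (-(Module.finrank ℝ E / q))) *
          (D * (J ^ (1 / q) * μ B ^ (1 - 1 / q))) := by
        refine setLIntegral_mono' measurableSet_Ioc fun t ht => ?_
        calc _ ≤ _ := mul_le_mul_left (hscale t ht) D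
          _ = _ := by ring
    _ = _ := by
        rw [lintegral_mul_const _ (by fun_prop), lintegral_Ioc_rpow_neg ((div_lt_one hq0).2 hq),
          mul_assoc]

/-- Morrey's estimate for the oscillation on a convex open set. -/
theorem enorm_sub_mul_measure_le_morrey {E : Type*} [NormedAddCommGroup E] [NormedSpace ℝ E]
    [MeasurableSpace E] [BorelSpace E] [FiniteDimensional ℝ E] (μ : Measure E)
    [μ.IsAddHaarMeasure] {B : Set E} (hB : IsOpen B) (hBc : Convex ℝ B)
    {u : E → ℝ} (hu : ContDiffOn ℝ 1 u B) {q : ℝ} (hq1 : 1 ≤ q) (hq : Module.finrank ℝ E < q)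
    {x y : E} (hx : x ∈ B) (hy : y ∈ B) {D : ℝ≥0∞} (hD : ∀ z ∈ B, ∀ w ∈ B, ‖w - z‖ₑ ≤ D) :
    ‖u x - u y‖ₑ * μ B ≤
      2 * (ENNReal.ofReal (1 / (1 - Module.finrank ℝ E / q)) * D *
        ((∫⁻ w in B, ‖fderivWithin ℝ u B w‖ₑ ^ q ∂μ) ^ (1 / q) * μ B ^ (1 - 1 / q))) := by
  have hm : AEMeasurable (fun w => ‖u x - u w‖ₑ) (μ.restrict B) :=
    ((continuousOn_const.sub hu.continuousOn).aemeasurable hB.measurableSet).enorm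
  calc ‖u x - u y‖ₑ * μ B = ∫⁻ _ in B, ‖u x - u y‖ₑ ∂μ := by simp
    _ ≤ ∫⁻ w in B, (‖u x - u w‖ₑ + ‖u y - u w‖ₑ) ∂μ := by
        refine lintegral_mono fun w => ?_
        simpa using enorm_sub_le (E := ℝ) (a := u x - u w) (b := u y - u w)
    _ = ∫⁻ w in B, ‖u x - u w‖ₑ ∂μ + ∫⁻ w in B, ‖u y - u w‖ₑ ∂μ := lintegral_add_left' hm _
    _ ≤ _ := by
        rw [two_mul]
        exact add_le_add (lintegral_enorm_sub_le_morrey μ hB hBc hu hq1 hq hx (hD x hx))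
          (lintegral_enorm_sub_le_morrey μ hB hBc hu hq1 hq hy (hD y hy))

theorem stmt_10 (n : ℕ) (hn : 2 ≤ n) (δ p : ℝ) (hδ : 0 < δ) (hδn : δ ≤ n) (hp : δ < p) :
    ∃ c : ℝ≥0∞, c ≠ ⊤ ∧
      ∀ (x : EuclideanSpace ℝ (Fin n)) (r : ℝ), 0 < r →
        ∀ u : EuclideanSpace ℝ (Fin n) → ℝ, ContDiffOn ℝ 1 u (ball x (2 * r)) →
          ∀ y ∈ ball x r,
            ENNReal.ofReal (|u x - u y|) ≤
              c * ENNReal.ofReal r *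
                ((choquet n δ (ball x (2 * r))
                    (fun v => ENNReal.ofReal (‖fderivWithin ℝ u (ball x (2 * r)) v‖ ^ p))) /
                  (volume (ball x (2 * r))) ^ (δ / (n : ℝ))) ^ (1 / p) := by
  have hn0 : (0 : ℝ) < n := by positivity
  have hp0 : 0 < p := hδ.trans hp
  set q : ℝ := p * n / δ with hq
  have hq0 : 0 < q := by positivity
  have hnq : (n : ℝ) < q := by
    rw [hq, lt_div_iff₀ hδ, mul_comm]
    gcongr
  have hq1 : 1 ≤ q := by
    have : (2 : ℝ) ≤ n := by exact_mod_cast hn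
    linarith
  set A := ENNReal.ofReal (1 / (1 - n / q))
  set K := ENNReal.ofReal (n / δ) * volume (ball (0 : EuclideanSpace ℝ (Fin n)) 1)
  have hK : K ≠ ⊤ := ENNReal.mul_ne_top ENNReal.ofReal_ne_top measure_ball_lt_top.ne
  refine ⟨8 * A * K ^ (1 / q), ENNReal.mul_ne_top
    (ENNReal.mul_ne_top (by simp) ENNReal.ofReal_ne_top)
    (ENNReal.rpow_ne_top_of_nonneg (by positivity) hK), fun x r hr u hu y hy => ?_⟩
  set B := ball x (2 * r)
  set V := volume B
  have hV0 : V ≠ 0 := (measure_ball_pos _ _ (by positivity)).ne'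
  have hVt : V ≠ ⊤ := measure_ball_lt_top.ne
  have hB : IsOpen B := isOpen_ball
  have hD : ∀ z ∈ B, ∀ w ∈ B, ‖w - z‖ₑ ≤ 4 * ENNReal.ofReal r := fun z hz w hw => by
    rw [← ofReal_norm, show (4 : ℝ≥0∞) = ENNReal.ofReal 4 by simp,
      ← ENNReal.ofReal_mul (by norm_num), ← dist_eq_norm]
    refine ENNReal.ofReal_le_ofReal ?_
    linarith [dist_triangle_right w z x, mem_ball.1 hz, mem_ball.1 hw]
  have hmorrey := enorm_sub_mul_measure_le_morrey volume hB (convex_ball x (2 * r)) hu hq1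
    (by simpa using hnq) (mem_ball_self (by positivity))
    (ball_subset_ball (by linarith) hy) hD
  have hchoquet := lintegral_rpow_le_choquet hδ hδn hp0 hB.measurableSet
    (((hu.continuousOn_fderivWithin hB.uniqueDiffOn le_rfl).norm).aemeasurable hB.measurableSet)
    (fun v => norm_nonneg (fderivWithin ℝ u B v))
  simp only [ofReal_norm] at hchoquet
  rw [finrank_euclideanSpace_fin] at hmorrey
  set I := choquet n δ B fun v => ENNReal.ofReal (‖fderivWithin ℝ u B v‖ ^ p)
  have hpow : (K * I ^ ((n : ℝ) / δ)) ^ (1 / q) = K ^ (1 / q) * I ^ (1 / p) := by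
    rw [ENNReal.mul_rpow_of_nonneg _ _ (by positivity), ← ENNReal.rpow_mul]
    congr 2
    rw [hq]
    field_simp
  have hquot : (I / V ^ (δ / (n : ℝ))) ^ (1 / p) = I ^ (1 / p) * V ^ (-(1 / q)) := by
    rw [div_eq_mul_inv, ENNReal.mul_rpow_of_nonneg _ _ (by positivity), ← ENNReal.rpow_neg,
      ← ENNReal.rpow_mul]
    congr 2
    rw [hq]
    field_simp
  have hVsplit : V ^ (1 - 1 / q) = V ^ (-(1 / q)) * V := by
    rw [show 1 - 1 / q = -(1 / q) + 1 by ring, ENNReal.rpow_add _ _ hV0 hVt, ENNReal.rpow_one]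
  rw [← Real.norm_eq_abs, ofReal_norm, hquot, ← ENNReal.mul_le_mul_iff_left hV0 hVt]
  calc ‖u x - u y‖ₑ * V
      ≤ 2 * (A * (4 * ENNReal.ofReal r) *
          ((K * I ^ ((n : ℝ) / δ)) ^ (1 / q) * V ^ (1 - 1 / q))) := hmorrey.trans (by gcongr)
    _ = _ := by
        rw [hpow, hVsplit]
        ring
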